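/- Let (γ,d) be a JDM instance with two regular classes, and let c_11 = ((Σ_{j∈V_1} d_j) − γ)/2 and c_22 = ((Σ_{j∈V_2} d_j) − γ)/2. Then for every G ∈ G'(γ,d) there exists a sequence of graphs G = G_0, G_1, …, G_t with t ≤ 4 such that every G_i belongs to G'(γ,d), each G_{i+1} is obtained from G_i by a hinge flip, and G_t is edge-balanced: G_t has exactly γ cut edges, exactly c_11 internal edges in V_1, and exactly c_22 internal edges in V_2. -/

import Mathlib

/-!
Write `dev v = deg G v - d v`, `S = ∑ v ∈ V₁, dev v` and `δ = cutCount G - γ`.  Counting the edges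
at a class gives `∑ v ∈ V₁, deg G v = 2 * intCount1 G + cutCount G` (`sum_deg_class`), so `G` is
edge-balanced as soon as `S = δ = 0`; moreover `S ≡ δ (mod 2)`, `|S| ≤ 2` and `|δ| ≤ 1`.
Exchanging the two classes, one may assume `S ≥ 0`.  What remains are `S = 0 = δ` (nothing to do),
`S = 1, δ = ±1`, and `S = 2, δ = 0`.

Two kinds of hinge flips are used.

* *Transfers* (`exists_transfer`): if `u, v` lie in the same class and `deg v < deg u`, some
  neighbour `z` of `u` is a non-neighbour of `v`, and `{u,z} → {z,v}` moves one unit of degree from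
  `u` to `v` without changing the type of the edge, hence without changing `S` and `δ`.
* *Crossing flips* `{i,j} → {j,k}` with `i ∈ V₁`, `k ∈ V₂`: they lower `S` by one, and lower `δ` if
  `j ∈ V₂`, raise it if `j ∈ V₁`.

If `S = 1` and `∑ |dev| ≤ 2`, then all deviations in `V₁` are nonnegative and all those in `V₂` are
nonpositive, and a degree count produces a crossing flip that leads to `S = δ = 0`
(`reach_of_small`).  If `S = 1` and `∑ |dev| > 2`, some class contains both a vertex of positive
and one of negative deviation, and a transfer between them lowers `∑ |dev|` by two
(`reach_of_one`).  If `S = 2`, then `V₁` has an edge and `V₂` a non-edge, since a realization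
exists; these yield a crossing flip `{i,j} → {j,k}`, and after at most one transfer into `i` it can
be performed without raising `∑ |dev|` (`reach_of_two`).  In the worst case these are two
transfers and two crossing flips.
-/

open SimpleGraph
open scoped symmDiff

/-- The degree of vertex `v` in graph `G`. -/
noncomputable def deg {n : ℕ} (G : SimpleGraph (Fin n)) (v : Fin n) : ℕ :=
  (G.neighborSet v).ncard

/-- The number of cut edges of `G`: edges with one endpoint in the class `V₁`
and one endpoint in the class `V₂ = V₁ᶜ`. -/
noncomputable def cutCount {n : ℕ} (V1 : Finset (Fin n)) (G : SimpleGraph (Fin n)) : ℕ :=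
  {e ∈ G.edgeSet | ∃ u v : Fin n, e = s(u, v) ∧ u ∈ V1 ∧ v ∉ V1}.ncard

/-- The number of internal edges of `G` inside `V₁`. -/
noncomputable def intCount1 {n : ℕ} (V1 : Finset (Fin n)) (G : SimpleGraph (Fin n)) : ℕ :=
  {e ∈ G.edgeSet | ∃ u v : Fin n, e = s(u, v) ∧ u ∈ V1 ∧ v ∈ V1}.ncard

/-- The number of internal edges of `G` inside `V₂ = V₁ᶜ`. -/
noncomputable def intCount2 {n : ℕ} (V1 : Finset (Fin n)) (G : SimpleGraph (Fin n)) : ℕ :=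
  {e ∈ G.edgeSet | ∃ u v : Fin n, e = s(u, v) ∧ u ∉ V1 ∧ v ∉ V1}.ncard

/-- `G ∈ 𝒢(γ,d)`: vertex `i` has degree `d i` for every `i`, and `G` has
exactly `γ` cut edges. -/
def memPAM {n : ℕ} (V1 : Finset (Fin n)) (γ : ℕ) (d : Fin n → ℕ)
    (G : SimpleGraph (Fin n)) : Prop :=
  (∀ v, deg G v = d v) ∧ cutCount V1 G = γ

/-- `G ∈ 𝒢'(γ,d)`: the degree sequence `d'` of `G` and its number `γ'` of cut
edges satisfy `Σ d'ᵢ = Σ dᵢ`, `Σ |dᵢ − d'ᵢ| ≤ 4`, and `|γ' − γ| ≤ 1`. -/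
def memPAM' {n : ℕ} (V1 : Finset (Fin n)) (γ : ℕ) (d : Fin n → ℕ)
    (G : SimpleGraph (Fin n)) : Prop :=
  (∑ v, deg G v = ∑ v, d v) ∧
  (∑ v, |(d v : ℤ) - (deg G v : ℤ)| ≤ 4) ∧
  |(cutCount V1 G : ℤ) - (γ : ℤ)| ≤ 1

/-- A hinge flip: replace an edge `{i,j}` of `G` by a non-edge `{j,k}`. -/
def hingeFlip {n : ℕ} (G H : SimpleGraph (Fin n)) : Prop :=
  ∃ i j k : Fin n, G.Adj i j ∧ j ≠ k ∧ ¬ G.Adj j k ∧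
    H = (G.deleteEdges {s(i, j)}) ⊔ fromEdgeSet {s(j, k)}

section

open Finset

/-! ### Counting adjacencies between vertex sets -/

/-- The number of ordered pairs `(u, w) ∈ X × Y` with `u` adjacent to `w`, as an integer. -/
noncomputable def adjSum {n : ℕ} (G : SimpleGraph (Fin n)) (X Y : Finset (Fin n)) : ℤ :=
  open Classical in ∑ u ∈ X, ∑ w ∈ Y, if G.Adj u w then 1 else 0

open Classical in
lemma deg_eq_card {n : ℕ} (G : SimpleGraph (Fin n)) (v : Fin n) :
    deg G v = (univ.filter (G.Adj v)).card := by
  unfold deg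
  rw [Set.ncard_eq_toFinset_card']
  congr 1
  ext w
  simp

lemma deg_eq_adjSum {n : ℕ} (G : SimpleGraph (Fin n)) (v : Fin n) :
    (deg G v : ℤ) = adjSum G {v} univ := by
  classical
  rw [deg_eq_card]
  simp [adjSum]

lemma sum_deg_eq_adjSum {n : ℕ} (G : SimpleGraph (Fin n)) (X : Finset (Fin n)) :
    ∑ v ∈ X, (deg G v : ℤ) = adjSum G X univ := by
  exact Finset.sum_congr rfl fun v _ => by rw [deg_eq_adjSum]; simp only [adjSum, sum_singleton]

lemma adjSum_comm {n : ℕ} (G : SimpleGraph (Fin n)) (X Y : Finset (Fin n)) :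
    adjSum G X Y = adjSum G Y X := by
  classical
  unfold adjSum
  rw [Finset.sum_comm]
  exact Finset.sum_congr rfl fun u _ => Finset.sum_congr rfl fun w _ =>
    by simp only [G.adj_comm w u]

lemma adjSum_univ {n : ℕ} (G : SimpleGraph (Fin n)) (X Y : Finset (Fin n)) :
    adjSum G X univ = adjSum G X Y + adjSum G X Yᶜ := by
  unfold adjSum
  rw [← Finset.sum_add_distrib]
  exact Finset.sum_congr rfl fun u _ => (Finset.sum_add_sum_compl Y _).symm

lemma cutCount_eq_adjSum {n : ℕ} (V : Finset (Fin n)) (G : SimpleGraph (Fin n)) :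
    (cutCount V G : ℤ) = adjSum G V Vᶜ := by
  classical
  have h : cutCount V G = ((V ×ˢ Vᶜ).filter (fun p => G.Adj p.1 p.2)).card := by
    unfold cutCount
    rw [← Set.ncard_coe_finset]
    symm
    refine Set.ncard_congr (fun p _ => s(p.1, p.2)) ?_ ?_ ?_
    · rintro ⟨u, w⟩ h
      simp only [coe_filter, mem_product, mem_compl, Set.mem_ofPred_eq] at h
      exact ⟨h.2, u, w, rfl, h.1⟩
    · rintro ⟨u, w⟩ ⟨u', w'⟩ h h' e
      simp only [coe_filter, mem_product, mem_compl, Set.mem_ofPred_eq] at h h'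
      simp only [Sym2.eq_iff] at e
      rcases e with ⟨rfl, rfl⟩ | ⟨rfl, rfl⟩
      · rfl
      · exact absurd h.1.1 h'.1.2
    · rintro e ⟨he, u, w, rfl, hu, hw⟩
      exact ⟨(u, w), by simpa [hu, hw] using he, rfl⟩
  rw [h, Finset.card_filter, Finset.sum_product]
  simp [adjSum]

lemma two_mul_intCount1 {n : ℕ} (V : Finset (Fin n)) (G : SimpleGraph (Fin n)) :
    2 * (intCount1 V G : ℤ) = adjSum G V V := by
  classical
  -- the handshake lemma, applied to the graph of the internal edges of `V`
  let K : SimpleGraph (Fin n) :=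
    { Adj := fun u w => G.Adj u w ∧ u ∈ V ∧ w ∈ V
      symm := ⟨fun u w h => ⟨h.1.symm, h.2.2, h.2.1⟩⟩
      loopless := ⟨fun u h => G.loopless.irrefl u h.1⟩ }
  have hE : {e ∈ G.edgeSet | ∃ u v : Fin n, e = s(u, v) ∧ u ∈ V ∧ v ∈ V} = K.edgeSet := by
    ext e
    induction e with | _ a b => ?_
    simp only [Set.mem_ofPred_eq, SimpleGraph.mem_edgeSet, K, Sym2.eq_iff]
    constructor
    · rintro ⟨h, u, v, ⟨rfl, rfl⟩ | ⟨rfl, rfl⟩, hu, hv⟩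
      · exact ⟨h, hu, hv⟩
      · exact ⟨h, hv, hu⟩
    · rintro ⟨h, hu, hv⟩
      exact ⟨h, a, b, Or.inl ⟨rfl, rfl⟩, hu, hv⟩
  have h := K.sum_degrees_eq_twice_card_edges
  have h2 : intCount1 V G = K.edgeFinset.card := by
    unfold intCount1
    rw [hE, Set.ncard_eq_toFinset_card', SimpleGraph.edgeFinset]
  rw [h2]
  have h3 : ∀ v, (K.degree v : ℤ)
      = if v ∈ V then ∑ w ∈ V, (if G.Adj v w then 1 else 0 : ℤ) else 0 := by
    intro v
    rw [← SimpleGraph.card_neighborFinset_eq_degree, SimpleGraph.neighborFinset_eq_filter,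
      Finset.card_filter]
    by_cases hv : v ∈ V
    · simp [K, hv, and_comm, ite_and]
    · simp [K, hv]
  zify at h
  rw [← h]
  simp only [h3, adjSum]
  simp

lemma intCount2_eq {n : ℕ} (V : Finset (Fin n)) (G : SimpleGraph (Fin n)) :
    intCount2 V G = intCount1 Vᶜ G := by
  simp [intCount1, intCount2]

lemma intCount1_eq {n : ℕ} (V : Finset (Fin n)) (G : SimpleGraph (Fin n)) :
    intCount1 V G = intCount2 Vᶜ G := by
  simp [intCount1, intCount2]

lemma cutCount_compl {n : ℕ} (V : Finset (Fin n)) (G : SimpleGraph (Fin n)) :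
    cutCount Vᶜ G = cutCount V G := by
  zify
  rw [cutCount_eq_adjSum, cutCount_eq_adjSum, compl_compl, adjSum_comm]

lemma sum_deg_class {n : ℕ} (V : Finset (Fin n)) (G : SimpleGraph (Fin n)) :
    ∑ v ∈ V, (deg G v : ℤ) = 2 * intCount1 V G + cutCount V G := by
  rw [sum_deg_eq_adjSum, adjSum_univ G V V, two_mul_intCount1, cutCount_eq_adjSum]

lemma adjSum_self_le {n : ℕ} (V : Finset (Fin n)) (G : SimpleGraph (Fin n)) :
    adjSum G V V ≤ V.card * (V.card - 1) := by
  classical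
  unfold adjSum
  have : ∀ u ∈ V, ∑ w ∈ V, (if G.Adj u w then 1 else 0 : ℤ) ≤ V.card - 1 := by
    intro u hu
    calc ∑ w ∈ V, (if G.Adj u w then 1 else 0 : ℤ) ≤ ∑ w ∈ V, (1 - if u = w then 1 else 0) := by
          refine Finset.sum_le_sum fun w _ => ?_
          by_cases h : u = w
          · subst h; simp
          · split_ifs <;> simp
      _ = V.card - 1 := by simp [hu]
  calc _ ≤ ∑ u ∈ V, ((V.card : ℤ) - 1) := Finset.sum_le_sum this
    _ = _ := by rw [sum_const, nsmul_eq_mul]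

lemma adjSum_self_of_complete {n : ℕ} (V : Finset (Fin n)) (G : SimpleGraph (Fin n))
    (h : ∀ u ∈ V, ∀ w ∈ V, u ≠ w → G.Adj u w) :
    adjSum G V V = V.card * (V.card - 1) := by
  classical
  unfold adjSum
  have : ∀ u ∈ V, ∑ w ∈ V, (if G.Adj u w then 1 else 0 : ℤ) = V.card - 1 := by
    intro u hu
    calc ∑ w ∈ V, (if G.Adj u w then 1 else 0 : ℤ) = ∑ w ∈ V, (1 - if u = w then 1 else 0) := by
          refine Finset.sum_congr rfl fun w hw => ?_
          by_cases e : u = w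
          · subst e; simp
          · simp [e, h u hu w hw e]
      _ = V.card - 1 := by simp [hu]
  rw [Finset.sum_congr rfl this, sum_const, nsmul_eq_mul]

/-! ### The effect of a hinge flip -/

/-- The hinge flip of `G` that replaces the edge `{i,j}` by `{j,k}`. -/
def flipGraph {n : ℕ} (G : SimpleGraph (Fin n)) (i j k : Fin n) : SimpleGraph (Fin n) :=
  (G.deleteEdges {s(i, j)}) ⊔ fromEdgeSet {s(j, k)}

/-- The triple `(i, j, k)` describes a hinge flip: `{i,j}` is an edge and `{j,k}` a non-edge. -/
def IsHinge {n : ℕ} (G : SimpleGraph (Fin n)) (i j k : Fin n) : Prop :=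
  G.Adj i j ∧ j ≠ k ∧ ¬ G.Adj j k

lemma flipGraph_adj {n : ℕ} (G : SimpleGraph (Fin n)) (i j k u w : Fin n) :
    (flipGraph G i j k).Adj u w ↔
      (G.Adj u w ∧ ¬ (u = i ∧ w = j ∨ u = j ∧ w = i)) ∨
        ((u = j ∧ w = k ∨ u = k ∧ w = j) ∧ u ≠ w) := by
  simp [flipGraph, SimpleGraph.deleteEdges_adj]

lemma IsHinge.adjSum_flip {n : ℕ} {G : SimpleGraph (Fin n)} {i j k : Fin n} (h : IsHinge G i j k)
    (X Y : Finset (Fin n)) :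
    adjSum (flipGraph G i j k) X Y = adjSum G X Y
      - (if i ∈ X then 1 else 0) * (if j ∈ Y then 1 else 0)
      - (if j ∈ X then 1 else 0) * (if i ∈ Y then 1 else 0)
      + (if j ∈ X then 1 else 0) * (if k ∈ Y then 1 else 0)
      + (if k ∈ X then 1 else 0) * (if j ∈ Y then 1 else 0) := by
  classical
  obtain ⟨h1, h2, h3⟩ := h
  have hij : i ≠ j := h1.ne
  have hik : i ≠ k := by rintro rfl; exact h3 h1.symm
  have h1' := h1.symm
  have h3' : ¬ G.Adj k j := fun h => h3 h.symm
  have key : ∀ u w : Fin n, (if (flipGraph G i j k).Adj u w then 1 else 0 : ℤ)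
      = (if G.Adj u w then 1 else 0)
      - (if u = i then 1 else 0) * (if w = j then 1 else 0)
      - (if u = j then 1 else 0) * (if w = i then 1 else 0)
      + (if u = j then 1 else 0) * (if w = k then 1 else 0)
      + (if u = k then 1 else 0) * (if w = j then 1 else 0) := by
    intro u w
    simp only [flipGraph_adj]
    by_cases a1 : u = i <;> by_cases a2 : u = j <;> by_cases a3 : u = k <;>
      by_cases b1 : w = i <;> by_cases b2 : w = j <;> by_cases b3 : w = k <;>
      simp_all
  simp only [adjSum, key, Finset.sum_add_distrib, Finset.sum_sub_distrib, ← Finset.mul_sum,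
    ← Finset.sum_mul, Finset.sum_ite_eq']

lemma IsHinge.deg_flip {n : ℕ} {G : SimpleGraph (Fin n)} {i j k : Fin n} (h : IsHinge G i j k)
    (v : Fin n) :
    (deg (flipGraph G i j k) v : ℤ)
      = deg G v - (if v = i then 1 else 0) + (if v = k then 1 else 0) := by
  rw [deg_eq_adjSum, deg_eq_adjSum, h.adjSum_flip]
  simp only [mem_singleton, mem_univ, if_true, eq_comm (a := v)]
  ring

/-- The surplus of `v`: the deviation of its degree from the prescribed one. -/
noncomputable def dev {n : ℕ} (d : Fin n → ℕ) (G : SimpleGraph (Fin n)) (v : Fin n) : ℤ :=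
  (deg G v : ℤ) - d v

lemma IsHinge.dev_flip {n : ℕ} {G : SimpleGraph (Fin n)} {i j k : Fin n} (h : IsHinge G i j k)
    (d : Fin n → ℕ) (v : Fin n) :
    dev d (flipGraph G i j k) v
      = dev d G v - (if v = i then 1 else 0) + (if v = k then 1 else 0) := by
  unfold dev
  rw [h.deg_flip]
  ring

lemma IsHinge.sum_dev_flip {n : ℕ} {G : SimpleGraph (Fin n)} {i j k : Fin n} (h : IsHinge G i j k)
    (d : Fin n → ℕ) (X : Finset (Fin n)) :
    ∑ v ∈ X, dev d (flipGraph G i j k) v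
      = ∑ v ∈ X, dev d G v - (if i ∈ X then 1 else 0) + (if k ∈ X then 1 else 0) := by
  simp only [h.dev_flip, Finset.sum_add_distrib, Finset.sum_sub_distrib, Finset.sum_ite_eq']

lemma IsHinge.sum_abs_dev_flip {n : ℕ} {G : SimpleGraph (Fin n)} {i j k : Fin n}
    (h : IsHinge G i j k) (d : Fin n → ℕ) :
    ∑ v, |dev d (flipGraph G i j k) v| = ∑ v, |dev d G v|
      + (|dev d G i - 1| - |dev d G i|) + (|dev d G k + 1| - |dev d G k|) := by
  have hik : i ≠ k := by rintro rfl; exact h.2.2 h.1.symm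
  have key : ∀ v, |dev d (flipGraph G i j k) v| = |dev d G v|
      + (if v = i then |dev d G i - 1| - |dev d G i| else 0)
      + (if v = k then |dev d G k + 1| - |dev d G k| else 0) := by
    intro v
    rw [h.dev_flip]
    by_cases a : v = i
    · subst a; simp [hik]
    · by_cases b : v = k
      · subst b; simp [a]
      · simp [a, b]
  simp only [key, Finset.sum_add_distrib, Finset.sum_ite_eq', mem_univ, if_true]

lemma IsHinge.cutCount_flip {n : ℕ} {G : SimpleGraph (Fin n)} {i j k : Fin n}
    (h : IsHinge G i j k) (V : Finset (Fin n)) :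
    (cutCount V (flipGraph G i j k) : ℤ) = cutCount V G
      - (if i ∈ V ↔ j ∈ V then 0 else 1) + (if j ∈ V ↔ k ∈ V then 0 else 1) := by
  rw [cutCount_eq_adjSum, cutCount_eq_adjSum, h.adjSum_flip]
  by_cases a : i ∈ V <;> by_cases b : j ∈ V <;> by_cases c : k ∈ V <;> simp [a, b, c]

/-- A vertex `u` of larger degree than `v` has a neighbour `z ≠ v` not adjacent to `v`. -/
lemma exists_transfer {n : ℕ} (G : SimpleGraph (Fin n)) (u v : Fin n) (h : deg G v < deg G u) :
    ∃ z, IsHinge G u z v := by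
  classical
  by_contra! hc
  -- otherwise every neighbour of `u` other than `v` is a neighbour of `v`
  have hN : ∀ z, G.Adj u z → z ≠ v → G.Adj z v := fun z hz hzv => by
    by_contra hn
    exact hc z ⟨hz, hzv, hn⟩
  rw [deg_eq_card, deg_eq_card] at h
  have h2 : (univ.filter (G.Adj u)).erase v ⊆ (univ.filter (G.Adj v)).erase u := by
    intro z hz
    simp only [mem_erase, mem_filter, mem_univ, true_and] at hz ⊢
    exact ⟨hz.2.ne', (hN z hz.2 hz.1).symm⟩
  have h3 := Finset.card_le_card h2
  by_cases huv : G.Adj u v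
  · rw [Finset.card_erase_of_mem (by simpa using huv),
      Finset.card_erase_of_mem (by simpa using huv.symm)] at h3
    have : 0 < (univ.filter (G.Adj v)).card := Finset.card_pos.2 ⟨u, by simpa using huv.symm⟩
    omega
  · rw [Finset.erase_eq_of_notMem (by simpa using huv),
      Finset.erase_eq_of_notMem (by simpa using fun h : G.Adj v u => huv h.symm)] at h3
    omega

/-! ### Reaching an edge-balanced graph -/

/-- Some edge-balanced graph is reached from `G` by at most `m` hinge flips inside `𝒢'(γ,d)`. -/
def Reach {n : ℕ} (V1 : Finset (Fin n)) (γ : ℕ) (d : Fin n → ℕ) (c11 c22 m : ℕ)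
    (G : SimpleGraph (Fin n)) : Prop :=
  ∃ t ≤ m, ∃ f : ℕ → SimpleGraph (Fin n), f 0 = G ∧
    (∀ i ≤ t, memPAM' V1 γ d (f i)) ∧
    (∀ i < t, hingeFlip (f i) (f (i+1))) ∧
    cutCount V1 (f t) = γ ∧ intCount1 V1 (f t) = c11 ∧ intCount2 V1 (f t) = c22

lemma Reach.mono {n : ℕ} {V1 : Finset (Fin n)} {γ : ℕ} {d : Fin n → ℕ} {c11 c22 m m' : ℕ}
    {G : SimpleGraph (Fin n)} (h : Reach V1 γ d c11 c22 m G) (hm : m ≤ m') :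
    Reach V1 γ d c11 c22 m' G := by
  obtain ⟨t, ht, hf⟩ := h
  exact ⟨t, ht.trans hm, hf⟩

lemma Reach.step {n : ℕ} {V1 : Finset (Fin n)} {γ : ℕ} {d : Fin n → ℕ} {c11 c22 m : ℕ}
    {G : SimpleGraph (Fin n)} {i j k : Fin n} (hG : memPAM' V1 γ d G) (hh : IsHinge G i j k)
    (h : Reach V1 γ d c11 c22 m (flipGraph G i j k)) : Reach V1 γ d c11 c22 (m + 1) G := by
  obtain ⟨t, ht, f, h0, h1, h2, h3⟩ := h
  obtain ⟨f', hf0, hfs⟩ : ∃ f' : ℕ → SimpleGraph (Fin n), f' 0 = G ∧ ∀ s, f' (s + 1) = f s :=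
    ⟨fun s => Nat.casesOn s G f, rfl, fun _ => rfl⟩
  refine ⟨t + 1, by omega, f', hf0, fun s hs => ?_, fun s hs => ?_, by rw [hfs]; exact h3⟩
  · cases s with
    | zero => rw [hf0]; exact hG
    | succ s => rw [hfs]; exact h1 s (by omega)
  · cases s with
    | zero => rw [hfs, hf0, h0]; exact ⟨i, j, k, hh.1, hh.2.1, hh.2.2, rfl⟩
    | succ s => rw [hfs, hfs]; exact h2 s (by omega)

/-- Membership in `𝒢'(γ,d)` in terms of deviations. -/
lemma memPAM'_iff {n : ℕ} (V1 : Finset (Fin n)) (γ : ℕ) (d : Fin n → ℕ)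
    (G : SimpleGraph (Fin n)) :
    memPAM' V1 γ d G ↔ ∑ v ∈ V1, dev d G v + ∑ v ∈ V1ᶜ, dev d G v = 0 ∧ ∑ v, |dev d G v| ≤ 4 ∧
      |(cutCount V1 G : ℤ) - γ| ≤ 1 := by
  unfold memPAM'
  rw [Finset.sum_add_sum_compl]
  simp only [dev, abs_sub_comm ((d _ : ℕ) : ℤ), Finset.sum_sub_distrib]
  refine and_congr_left fun _ => ?_
  zify
  exact sub_eq_zero.symm

/-- The part of a JDM instance with two regular classes that is invariant under exchanging the
classes.  The last two fields, which bound the degree sums of the classes, are all that is needed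
of graphicality. -/
structure Inst {n : ℕ} (V1 : Finset (Fin n)) (γ : ℕ) (d : Fin n → ℕ) (c11 c22 : ℕ) : Prop where
  reg : ∀ u v, (u ∈ V1 ↔ v ∈ V1) → d u = d v
  lo : 1 ≤ γ
  hi : (γ : ℤ) < V1.card * V1ᶜ.card
  h11 : 2 * (c11 : ℤ) + γ = ∑ j ∈ V1, (d j : ℤ)
  h22 : 2 * (c22 : ℤ) + γ = ∑ j ∈ V1ᶜ, (d j : ℤ)
  max11 : 2 * (c11 : ℤ) ≤ V1.card * (V1.card - 1)
  max22 : 2 * (c22 : ℤ) ≤ V1ᶜ.card * (V1ᶜ.card - 1)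

section

variable {n : ℕ} {V1 : Finset (Fin n)} {γ : ℕ} {d : Fin n → ℕ} {c11 c22 : ℕ}

lemma Inst.sum_dev1 (I : Inst V1 γ d c11 c22) (G : SimpleGraph (Fin n)) :
    ∑ v ∈ V1, dev d G v = 2 * intCount1 V1 G + cutCount V1 G - 2 * c11 - γ := by
  simp only [dev, Finset.sum_sub_distrib, sum_deg_class]
  linarith [I.h11]

lemma Inst.sum_dev2 (I : Inst V1 γ d c11 c22) (G : SimpleGraph (Fin n)) :
    ∑ v ∈ V1ᶜ, dev d G v = 2 * intCount2 V1 G + cutCount V1 G - 2 * c22 - γ := by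
  simp only [dev, Finset.sum_sub_distrib, sum_deg_class, cutCount_compl, intCount2_eq]
  linarith [I.h22]

lemma Inst.reach_zero (I : Inst V1 γ d c11 c22) (G : SimpleGraph (Fin n))
    (hG : memPAM' V1 γ d G) (hS : ∑ v ∈ V1, dev d G v = 0) (hc : cutCount V1 G = γ) :
    Reach V1 γ d c11 c22 0 G := by
  have h1 := I.sum_dev1 G
  have h2 := I.sum_dev2 G
  have h0 := ((memPAM'_iff V1 γ d G).1 hG).1
  have e1 : intCount1 V1 G = c11 := by omega
  have e2 : intCount2 V1 G = c22 := by omega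
  exact ⟨0, le_rfl, fun _ => G, rfl, fun _ _ => hG, fun i hi => absurd hi (Nat.not_lt_zero i),
    hc, e1, e2⟩

lemma Inst.exists_edge (I : Inst V1 γ d c11 c22) (G : SimpleGraph (Fin n))
    (h : (cutCount V1 G : ℤ) - γ < ∑ v ∈ V1, dev d G v) :
    ∃ r ∈ V1, ∃ s ∈ V1, G.Adj r s := by
  by_contra! hc
  have h1 := I.sum_dev1 G
  have h2 := two_mul_intCount1 V1 G
  have h3 : adjSum G V1 V1 = 0 :=
    Finset.sum_eq_zero fun u hu => Finset.sum_eq_zero fun w hw => by simp [hc u hu w hw]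
  omega

lemma Inst.exists_nonedge (I : Inst V1 γ d c11 c22) (G : SimpleGraph (Fin n))
    (h : ∑ v ∈ V1ᶜ, dev d G v < (cutCount V1 G : ℤ) - γ) :
    ∃ p ∈ V1ᶜ, ∃ q ∈ V1ᶜ, p ≠ q ∧ ¬ G.Adj p q := by
  by_contra! hc
  have h1 := I.sum_dev2 G
  have h2 := two_mul_intCount1 V1ᶜ G
  rw [adjSum_self_of_complete _ _ hc, ← intCount2_eq] at h2
  have h3 := I.max22
  linarith

lemma exists_cut_edge (G : SimpleGraph (Fin n)) (h : 0 < cutCount V1 G) :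
    ∃ i ∈ V1, ∃ j ∈ V1ᶜ, G.Adj i j := by
  by_contra! hc
  have h2 := cutCount_eq_adjSum V1 G
  have h3 : adjSum G V1 V1ᶜ = 0 :=
    Finset.sum_eq_zero fun u hu => Finset.sum_eq_zero fun w hw => by simp [hc u hu w hw]
  omega

lemma exists_cut_nonedge (G : SimpleGraph (Fin n))
    (h : (cutCount V1 G : ℤ) < V1.card * V1ᶜ.card) :
    ∃ i ∈ V1, ∃ j ∈ V1ᶜ, ¬ G.Adj i j := by
  by_contra! hc
  have h2 := cutCount_eq_adjSum V1 G
  have h3 : adjSum G V1 V1ᶜ = V1.card * V1ᶜ.card := by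
    unfold adjSum
    rw [Finset.sum_congr rfl fun u hu => Finset.sum_congr rfl fun w hw => if_pos (hc u hu w hw)]
    simp
  omega

lemma abs_sub_one_le (x : ℤ) : |x - 1| ≤ |x| + 1 := by
  simpa using abs_sub x 1

lemma abs_add_one_le (x : ℤ) : |x + 1| ≤ |x| + 1 := by
  simpa using abs_add_le x 1

lemma abs_sub_one_of_pos {x : ℤ} (h : 1 ≤ x) : |x - 1| = |x| - 1 := by
  rw [abs_of_nonneg (by omega), abs_of_nonneg (by omega)]

lemma abs_add_one_of_neg {x : ℤ} (h : x ≤ -1) : |x + 1| = |x| - 1 := by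
  rw [abs_of_nonpos (by omega), abs_of_nonpos (by omega)]
  ring

/-- If `S = 1` and `∑ |dev| ≤ 2`, one crossing flip produces an edge-balanced graph. -/
lemma Inst.reach_of_small (I : Inst V1 γ d c11 c22) (G : SimpleGraph (Fin n))
    (hG : memPAM' V1 γ d G) (hS : ∑ v ∈ V1, dev d G v = 1) (hL : ∑ v, |dev d G v| ≤ 2) :
    Reach V1 γ d c11 c22 1 G := by
  classical
  obtain ⟨h0, -, hcut⟩ := (memPAM'_iff V1 γ d G).1 hG
  have hS2 : ∑ v ∈ V1ᶜ, dev d G v = -1 := by omega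
  rw [← Finset.sum_add_sum_compl V1] at hL
  have hA1 := Finset.abs_sum_le_sum_abs (dev d G) V1
  have hA2 := Finset.abs_sum_le_sum_abs (dev d G) V1ᶜ
  rw [hS] at hA1
  rw [hS2] at hA2
  norm_num at hA1 hA2
  have hpos : ∀ v ∈ V1, 0 ≤ dev d G v := by
    intro v hv
    have h := Finset.single_le_sum (f := fun v => |dev d G v| - dev d G v)
      (fun w _ => sub_nonneg.2 (le_abs_self _)) hv
    rw [Finset.sum_sub_distrib] at h
    have := abs_nonneg (dev d G v)
    omega
  have hneg : ∀ v ∈ V1ᶜ, dev d G v ≤ 0 := by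
    intro v hv
    have h := Finset.single_le_sum (f := fun v => |dev d G v| + dev d G v)
      (fun w _ => by have := neg_abs_le (dev d G w); omega) hv
    rw [Finset.sum_add_distrib] at h
    have := abs_nonneg (dev d G v)
    omega
  have hpair1 : ∀ r ∈ V1, ∀ s ∈ V1, r ≠ s → dev d G r + dev d G s ≤ 1 := by
    intro r hr s hs hrs
    rw [← hS, ← Finset.sum_pair hrs]
    exact Finset.sum_le_sum_of_subset_of_nonneg (by simp [insert_subset_iff, hr, hs])
      fun v hv _ => hpos v hv
  have hpair2 : ∀ r ∈ V1ᶜ, ∀ s ∈ V1ᶜ, r ≠ s → -1 ≤ dev d G r + dev d G s := by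
    intro r hr s hs hrs
    have hsub : ({r, s} : Finset (Fin n)) ⊆ V1ᶜ := by
      rw [insert_subset_iff, singleton_subset_iff]
      exact ⟨hr, hs⟩
    have h := Finset.sum_le_sum_of_subset_of_nonneg (f := fun v => - dev d G v) hsub
      fun v hv _ => neg_nonneg.2 (hneg v hv)
    rw [Finset.sum_neg_distrib, Finset.sum_neg_distrib, Finset.sum_pair hrs] at h
    omega
  have hpar := I.sum_dev1 G
  rw [abs_le] at hcut
  -- it suffices to find a crossing flip whose middle vertex lies in the right class
  have fin : ∀ i ∈ V1, ∀ k ∈ V1ᶜ, ∀ j, IsHinge G i j k →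
      (j ∈ V1 ↔ (cutCount V1 G : ℤ) - γ = -1) → Reach V1 γ d c11 c22 1 G := by
    intro i hi k hk j hh hj
    rw [mem_compl] at hk
    have e1 := hh.sum_dev_flip d V1
    have e2 := hh.sum_dev_flip d V1ᶜ
    have e3 := hh.sum_abs_dev_flip d
    have e4 := hh.cutCount_flip V1
    rw [← Finset.sum_add_sum_compl V1 (fun v => |dev d G v|)] at e3
    have b1 := abs_sub_one_le (dev d G i)
    have b2 := abs_add_one_le (dev d G k)
    simp only [hi, hk, mem_compl, not_true, not_false_iff, if_true, if_false, true_iff,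
      iff_false] at e1 e2 e4
    have hc' : (cutCount V1 (flipGraph G i j k) : ℤ) = γ := by
      by_cases hj' : j ∈ V1
      · have := hj.1 hj'
        simp only [hj', not_true, if_true, if_false] at e4
        omega
      · have : ¬ (cutCount V1 G : ℤ) - γ = -1 := fun h => hj' (hj.2 h)
        simp only [hj', not_false_iff, if_true, if_false] at e4
        omega
    refine Reach.step hG hh (I.reach_zero _ ((memPAM'_iff _ _ _ _).2 ⟨by omega, by omega, ?_⟩)
      (by omega) (by omega))
    rw [hc']; simp
  have hlo := I.lo
  have hhi := I.hi
  rcases (show (cutCount V1 G : ℤ) - γ = 1 ∨ (cutCount V1 G : ℤ) - γ = -1 by omega) with hδ | hδ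
  · obtain ⟨p, hp, q, hq, hpq, hn⟩ := I.exists_nonedge G (by omega)
    obtain ⟨x, hx, y, hy, hxy⟩ := exists_cut_edge (V1 := V1) G (by omega)
    have hn' : ¬ G.Adj q p := fun h => hn h.symm
    have nj : ∀ j ∈ V1ᶜ, (j ∈ V1 ↔ (cutCount V1 G : ℤ) - γ = -1) := by
      intro j hj
      simp only [mem_compl] at hj
      simp only [hj, false_iff]
      omega
    by_contra hR
    -- with no crossing flip available, a vertex of `V₂` that misses another vertex of `V₂` has
    -- no neighbour in `V₁`
    have low : ∀ p ∈ V1ᶜ, ∀ q ∈ V1ᶜ, p ≠ q → ¬ G.Adj p q → deg G p + 2 ≤ V1ᶜ.card := by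
      intro p hp q hq hpq hn
      have hsub : univ.filter (G.Adj p) ⊆ (V1ᶜ.erase p).erase q := by
        intro w hw
        simp only [mem_filter, mem_univ, true_and] at hw
        refine mem_erase.2 ⟨fun e => hn (e ▸ hw), mem_erase.2 ⟨hw.ne', ?_⟩⟩
        by_contra hw1
        exact hR (fin w (by simpa using hw1) q hq p ⟨hw.symm, hpq, hn⟩ (nj p hp))
      have hle := Finset.card_le_card hsub
      have hq' : q ∈ V1ᶜ.erase p := mem_erase.2 ⟨hpq.symm, hq⟩
      have c1 := Finset.card_erase_add_one hq'
      have c2 := Finset.card_erase_add_one hp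
      rw [deg_eq_card]
      omega
    have l1 := low p hp q hq hpq hn
    have l2 := low q hq p hp hpq.symm hn'
    have high : V1ᶜ.card ≤ deg G y := by
      have hsub : insert x (V1ᶜ.erase y) ⊆ univ.filter (G.Adj y) := by
        intro w hw
        simp only [mem_filter, mem_univ, true_and]
        rcases mem_insert.1 hw with rfl | hw
        · exact hxy.symm
        · obtain ⟨hwy, hw⟩ := mem_erase.1 hw
          by_contra hyw
          exact hR (fin x hx w hw y ⟨hxy, hwy.symm, hyw⟩ (nj y hy))
      have hle := Finset.card_le_card hsub
      rw [Finset.card_insert_of_notMem (fun h => (mem_compl.1 (mem_of_mem_erase h)) hx),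
        Finset.card_erase_add_one hy] at hle
      rw [deg_eq_card]
      exact hle
    have dp := I.reg p y (by simp only [mem_compl] at hp hy; simp [hp, hy])
    have dq := I.reg q y (by simp only [mem_compl] at hq hy; simp [hq, hy])
    have np := hneg p hp
    have nq := hneg q hq
    have ny := hneg y hy
    have npq := hpair2 p hp q hq hpq
    unfold dev at np nq ny npq
    omega
  · obtain ⟨r, hr, s, hs, hrs⟩ := I.exists_edge G (by omega)
    obtain ⟨x, hx, y, hy, hxy⟩ := exists_cut_nonedge (V1 := V1) G (by omega)
    have nj : ∀ j ∈ V1, (j ∈ V1 ↔ (cutCount V1 G : ℤ) - γ = -1) := by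
      intro j hj
      simp only [hj, true_iff]
      omega
    by_contra hR
    -- with no crossing flip available, a vertex of `V₁` with a neighbour in `V₁` is adjacent to
    -- all of `V₂`
    have high : ∀ r ∈ V1, ∀ s ∈ V1, G.Adj r s → V1ᶜ.card + 1 ≤ deg G r := by
      intro r hr s hs hrs
      have hsub : insert s V1ᶜ ⊆ univ.filter (G.Adj r) := by
        intro w hw
        simp only [mem_filter, mem_univ, true_and]
        rcases mem_insert.1 hw with rfl | hw
        · exact hrs
        · by_contra hyw
          exact hR (fin s hs w hw r ⟨hrs.symm, fun e => mem_compl.1 hw (e ▸ hr), hyw⟩ (nj r hr))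
      have hle := Finset.card_le_card hsub
      rw [Finset.card_insert_of_notMem (fun h => (mem_compl.1 h) hs)] at hle
      rw [deg_eq_card]
      exact hle
    have l1 := high r hr s hs hrs
    have l2 := high s hs r hr hrs.symm
    have low : deg G x + 1 ≤ V1ᶜ.card := by
      have hsub : univ.filter (G.Adj x) ⊆ V1ᶜ.erase y := by
        intro w hw
        simp only [mem_filter, mem_univ, true_and] at hw
        refine mem_erase.2 ⟨fun e => hxy (e ▸ hw), ?_⟩
        by_contra hw1
        exact hR (fin w (by simpa using hw1) y hy x
          ⟨hw.symm, fun e => mem_compl.1 hy (e ▸ hx), hxy⟩ (nj x hx))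
      have hle := Finset.card_le_card hsub
      have c2 := Finset.card_erase_add_one hy
      rw [deg_eq_card]
      omega
    have dp := I.reg r x (by simp [hr, hx])
    have dq := I.reg s x (by simp [hs, hx])
    have np := hpos r hr
    have nq := hpos s hs
    have ny := hpos x hx
    have npq := hpair1 r hr s hs hrs.ne
    unfold dev at np nq ny npq
    omega

/-- A transfer inside a class preserves both class sums of the deviations and the cut count. -/
lemma IsHinge.transfer {G : SimpleGraph (Fin n)} {u z v : Fin n} (h : IsHinge G u z v)
    (huv : u ∈ V1 ↔ v ∈ V1) (d : Fin n → ℕ) :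
    ∑ w ∈ V1, dev d (flipGraph G u z v) w = ∑ w ∈ V1, dev d G w ∧
    ∑ w ∈ V1ᶜ, dev d (flipGraph G u z v) w = ∑ w ∈ V1ᶜ, dev d G w ∧
    cutCount V1 (flipGraph G u z v) = cutCount V1 G := by
  have e1 := h.sum_dev_flip d V1
  have e2 := h.sum_dev_flip d V1ᶜ
  have e4 := h.cutCount_flip V1
  simp only [mem_compl, huv] at e1 e2 e4
  refine ⟨by omega, by omega, ?_⟩
  by_cases a : z ∈ V1 <;> by_cases b : v ∈ V1 <;> simp [a, b] at e4 <;> omega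

lemma Inst.reach_of_one (I : Inst V1 γ d c11 c22) (G : SimpleGraph (Fin n))
    (hG : memPAM' V1 γ d G) (hS : ∑ v ∈ V1, dev d G v = 1) :
    Reach V1 γ d c11 c22 2 G := by
  by_cases hL : ∑ v, |dev d G v| ≤ 2
  · exact (I.reach_of_small G hG hS hL).mono (by omega)
  obtain ⟨h0, h4, hcut⟩ := (memPAM'_iff V1 γ d G).1 hG
  have hmix : ∃ u v, (u ∈ V1 ↔ v ∈ V1) ∧ 1 ≤ dev d G u ∧ dev d G v ≤ -1 := by
    by_contra! hc
    -- without a mixed class the deviations in `V₁` are nonnegative and those in `V₂` nonpositive,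
    -- so that `∑ |dev| = 1 + 1`
    have hpos : ∀ v ∈ V1, 0 ≤ dev d G v := by
      obtain ⟨a, ha, ha'⟩ := Finset.exists_lt_of_sum_lt (s := V1) (f := fun _ => (0 : ℤ))
        (g := dev d G) (by simp [hS])
      intro v hv
      have := hc a v (by simp [ha, hv]) (by omega)
      omega
    have hneg : ∀ v ∈ V1ᶜ, dev d G v ≤ 0 := by
      obtain ⟨a, ha, ha'⟩ := Finset.exists_lt_of_sum_lt (s := V1ᶜ) (f := dev d G)
        (g := fun _ => (0 : ℤ)) (by simp only [sum_const_zero]; omega)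
      intro v hv
      by_contra hv'
      have := hc v a (by rw [mem_compl] at ha hv; simp [ha, hv]) (by omega)
      omega
    apply hL
    have s1 : ∑ v ∈ V1, |dev d G v| = ∑ v ∈ V1, dev d G v :=
      Finset.sum_congr rfl fun v hv => abs_of_nonneg (hpos v hv)
    have s2 : ∑ v ∈ V1ᶜ, |dev d G v| = - ∑ v ∈ V1ᶜ, dev d G v := by
      rw [← Finset.sum_neg_distrib]
      exact Finset.sum_congr rfl fun v hv => abs_of_nonpos (hneg v hv)
    rw [← Finset.sum_add_sum_compl V1]
    omega
  obtain ⟨u, v, huv, hu, hv⟩ := hmix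
  have hdeg : deg G v < deg G u := by
    have := I.reg u v huv
    unfold dev at hu hv
    omega
  obtain ⟨z, hz⟩ := exists_transfer G u v hdeg
  obtain ⟨e1, e2, e4⟩ := hz.transfer huv d
  have e3 := hz.sum_abs_dev_flip d
  rw [abs_sub_one_of_pos hu, abs_add_one_of_neg hv] at e3
  refine Reach.step hG hz (I.reach_of_small _ ((memPAM'_iff _ _ _ _).2 ⟨by omega, by omega, ?_⟩)
    (by omega) (by omega))
  rw [e4]; exact hcut

lemma Inst.reach_of_two (I : Inst V1 γ d c11 c22) (G : SimpleGraph (Fin n))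
    (hG : memPAM' V1 γ d G) (hS : ∑ v ∈ V1, dev d G v = 2) (hδ : cutCount V1 G = γ) :
    Reach V1 γ d c11 c22 4 G := by
  obtain ⟨h0, h4, hcut⟩ := (memPAM'_iff V1 γ d G).1 hG
  -- a crossing flip that removes a unit of degree from a vertex of positive deviation
  have go : ∀ G' : SimpleGraph (Fin n), memPAM' V1 γ d G' → ∑ v ∈ V1, dev d G' v = 2 →
      cutCount V1 G' = γ → ∀ i ∈ V1, ∀ k ∈ V1ᶜ, ∀ j, IsHinge G' i j k → 1 ≤ dev d G' i →
      Reach V1 γ d c11 c22 3 G' := by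
    intro G' hG' hS' hδ' i hi k hk j hh hdi
    obtain ⟨h0', h4', -⟩ := (memPAM'_iff V1 γ d G').1 hG'
    rw [mem_compl] at hk
    have e1 := hh.sum_dev_flip d V1
    have e2 := hh.sum_dev_flip d V1ᶜ
    have e3 := hh.sum_abs_dev_flip d
    have e4 := hh.cutCount_flip V1
    have b2 := abs_add_one_le (dev d G' k)
    rw [abs_sub_one_of_pos hdi] at e3
    simp only [hi, hk, mem_compl, not_true, not_false_iff, if_true, if_false, true_iff,
      iff_false] at e1 e2 e4
    refine Reach.step hG' hh (I.reach_of_one _ ((memPAM'_iff _ _ _ _).2 ⟨by omega, by omega, ?_⟩)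
      (by omega))
    rw [abs_le]
    by_cases hj' : j ∈ V1 <;> simp only [hj', not_true, not_false_iff, if_true, if_false] at e4 <;>
      omega
  obtain ⟨i, hi, k, hk, j, hh⟩ : ∃ i ∈ V1, ∃ k ∈ V1ᶜ, ∃ j, IsHinge G i j k := by
    obtain ⟨r, hr, s, hs, hrs⟩ := I.exists_edge G (by omega)
    obtain ⟨p, hp, q, hq, hpq, hn⟩ := I.exists_nonedge G (by omega)
    by_cases hrp : G.Adj r p
    · exact ⟨r, hr, q, hq, p, hrp, hpq, hn⟩
    · exact ⟨s, hs, p, hp, r, hrs.symm, fun e => mem_compl.1 hp (e ▸ hr), hrp⟩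
  by_cases hdi : 1 ≤ dev d G i
  · exact (go G hG hS hδ i hi k hk j hh hdi).mono (by omega)
  obtain ⟨a, ha, ha'⟩ := Finset.exists_lt_of_sum_lt (s := V1) (f := fun _ => (0 : ℤ))
    (g := dev d G) (by simp [hS])
  have hai : a ≠ i := by rintro rfl; omega
  have hdeg : deg G i < deg G a := by
    have := I.reg a i (by simp [ha, hi])
    unfold dev at ha' hdi
    omega
  obtain ⟨z, hz⟩ := exists_transfer G a i hdeg
  obtain ⟨e1, e2, e4⟩ := hz.transfer (V1 := V1) (by simp [ha, hi]) d
  have e3 := hz.sum_abs_dev_flip d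
  have b2 := abs_add_one_le (dev d G i)
  rw [abs_sub_one_of_pos (by omega)] at e3
  have hG' : memPAM' V1 γ d (flipGraph G a z i) :=
    (memPAM'_iff _ _ _ _).2 ⟨by omega, by omega, by rw [e4]; exact hcut⟩
  -- the transfer into `i` touches neither the edge `{i,j}` nor the non-edge `{j,k}`
  have hh' : IsHinge (flipGraph G a z i) i j k := by
    obtain ⟨h1, h2, h3⟩ := hh
    have hik : i ≠ k := fun e => mem_compl.1 hk (e ▸ hi)
    refine ⟨(flipGraph_adj ..).2 (Or.inl ⟨h1, ?_⟩), h2, fun h => ?_⟩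
    · rintro (⟨e, -⟩ | ⟨e, -⟩)
      · exact hai e.symm
      · exact hz.2.1 e.symm
    · rcases (flipGraph_adj ..).1 h with h | ⟨⟨-, e⟩ | ⟨e, -⟩, -⟩
      · exact h3 h.1
      · exact hik e.symm
      · exact h1.ne e.symm
  -- a deficit at `i` is impossible, since it would make `∑ |dev|` exceed `4`
  by_cases hdi' : dev d G i = 0
  · refine Reach.step hG hz (go _ hG' (by omega) (by omega) i hi k hk j hh' ?_)
    rw [hz.dev_flip]
    simp [hai.symm, hdi']
  · exfalso
    have hA2 := Finset.abs_sum_le_sum_abs (dev d G) V1ᶜ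
    have hA1 := Finset.single_le_sum (f := fun v => |dev d G v| - dev d G v)
      (fun w _ => sub_nonneg.2 (le_abs_self _)) hi
    rw [Finset.sum_sub_distrib] at hA1
    rw [← Finset.sum_add_sum_compl V1] at h4
    rw [show ∑ v ∈ V1ᶜ, dev d G v = -2 by omega] at hA2
    norm_num at hA2
    have := abs_nonneg (dev d G i)
    omega

lemma Inst.reach_of_nonneg (I : Inst V1 γ d c11 c22) (G : SimpleGraph (Fin n))
    (hG : memPAM' V1 γ d G) (hS : 0 ≤ ∑ v ∈ V1, dev d G v) :
    Reach V1 γ d c11 c22 4 G := by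
  obtain ⟨h0, h4, hcut⟩ := (memPAM'_iff V1 γ d G).1 hG
  have hpar := I.sum_dev1 G
  rw [abs_le] at hcut
  have hle : ∑ v ∈ V1, dev d G v ≤ 2 := by
    have hA1 := Finset.abs_sum_le_sum_abs (dev d G) V1
    have hA2 := Finset.abs_sum_le_sum_abs (dev d G) V1ᶜ
    rw [← Finset.sum_add_sum_compl V1] at h4
    have := le_abs_self (∑ v ∈ V1, dev d G v)
    have := neg_le_abs (∑ v ∈ V1ᶜ, dev d G v)
    omega
  rcases (show ∑ v ∈ V1, dev d G v = 0 ∨ ∑ v ∈ V1, dev d G v = 1 ∨ ∑ v ∈ V1, dev d G v = 2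
    by omega) with h | h | h
  · exact (I.reach_zero G hG h (by omega)).mono (by omega)
  · exact (I.reach_of_one G hG h).mono (by omega)
  · exact I.reach_of_two G hG h (by omega)

lemma Inst.swap (I : Inst V1 γ d c11 c22) : Inst V1ᶜ γ d c22 c11 where
  reg u v h := I.reg u v (by simpa [not_iff_not] using h)
  lo := I.lo
  hi := by rw [compl_compl, mul_comm]; exact I.hi
  h11 := I.h22
  h22 := by rw [compl_compl]; exact I.h11
  max11 := I.max22
  max22 := by rw [compl_compl]; exact I.max11

lemma memPAM'_compl (G : SimpleGraph (Fin n)) : memPAM' V1ᶜ γ d G ↔ memPAM' V1 γ d G := by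
  simp only [memPAM', cutCount_compl]

lemma Reach.of_swap {m : ℕ} {G : SimpleGraph (Fin n)} (h : Reach V1ᶜ γ d c22 c11 m G) :
    Reach V1 γ d c11 c22 m G := by
  obtain ⟨t, ht, f, h0, h1, h2, h3, h4, h5⟩ := h
  refine ⟨t, ht, f, h0, fun i hi => (memPAM'_compl _).1 (h1 i hi), h2, ?_, ?_, ?_⟩
  · rw [← cutCount_compl]; exact h3
  · rw [intCount1_eq]; exact h5
  · rw [intCount2_eq]; exact h4

end

end

/-- For a JDM instance with two regular classes, every
`G ∈ 𝒢'(γ,d)` can be transformed by at most `4` hinge flips, within `𝒢'(γ,d)`,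
into an edge-balanced graph: one with exactly `γ` cut edges, `c₁₁` internal
edges in `V₁` and `c₂₂` internal edges in `V₂`. -/
theorem stmt14 {n : ℕ} (V1 : Finset (Fin n)) (β1 β2 γ : ℕ) (d : Fin n → ℕ)
    (c11 c22 : ℕ)
    (hV1 : V1.Nonempty) (hV2 : V1ᶜ.Nonempty)
    (hd : ∀ v, d v = if v ∈ V1 then β1 else β2)
    (hβ1lo : 1 ≤ β1) (hβ1hi : β1 ≤ n - 1)
    (hβ2lo : 1 ≤ β2) (hβ2hi : β2 ≤ n - 1)
    (hγlo : 1 ≤ γ) (hγhi : γ ≤ V1.card * V1ᶜ.card - 1)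
    (hgraphical : ∃ H : SimpleGraph (Fin n), memPAM V1 γ d H)
    (hc11 : 2 * c11 + γ = ∑ j ∈ V1, d j)
    (hc22 : 2 * c22 + γ = ∑ j ∈ V1ᶜ, d j) :
    ∀ G : SimpleGraph (Fin n), memPAM' V1 γ d G →
      ∃ t ≤ 4, ∃ f : ℕ → SimpleGraph (Fin n), f 0 = G ∧
        (∀ i ≤ t, memPAM' V1 γ d (f i)) ∧
        (∀ i < t, hingeFlip (f i) (f (i+1))) ∧
        cutCount V1 (f t) = γ ∧ intCount1 V1 (f t) = c11 ∧ intCount2 V1 (f t) = c22 := by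
  intro G hG
  have hprod : 0 < V1.card * V1ᶜ.card := Nat.mul_pos hV1.card_pos hV2.card_pos
  obtain ⟨H, hH, hHc⟩ := hgraphical
  have m1 := sum_deg_class V1 H
  have m2 := sum_deg_class V1ᶜ H
  have i1 := two_mul_intCount1 V1 H
  have i2 := two_mul_intCount1 V1ᶜ H
  have l1 := adjSum_self_le V1 H
  have l2 := adjSum_self_le V1ᶜ H
  rw [cutCount_compl] at m2
  simp only [hH, hHc] at m1 m2
  zify at hc11 hc22
  have I : Inst V1 γ d c11 c22 :=
    { reg := fun u v h => by simp [hd, h]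
      lo := hγlo
      hi := by exact_mod_cast (show γ < V1.card * V1ᶜ.card by omega)
      h11 := hc11
      h22 := hc22
      max11 := by linarith
      max22 := by linarith }
  rcases le_total 0 (∑ v ∈ V1, dev d G v) with h | h
  · exact I.reach_of_nonneg G hG h
  · have h0 := ((memPAM'_iff V1 γ d G).1 hG).1
    exact (I.swap.reach_of_nonneg G ((memPAM'_compl G).2 hG) (by omega)).of_swap
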